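/- Let n = 2m be a positive even integer. Let H be a complex Hilbert space with grading operator ε, F a bounded operator with F² = 1 and Fε = −εF, A a ℂ-algebra, and ρ : A → B(H) an algebra homomorphism into even operators with Fρ(a) − ρ(a)F (n+1)-Schatten for all a ∈ A. Then the (n+1)-linear functional τⁿ on A defined by τⁿ(a₀, a₁, …, aₙ) := (2iπ)^m m!·Tr_s(ρ(a₀)dρ(a₁)⋯dρ(aₙ)) is well defined (the relevant graded commutator with F is trace class) and is a cyclic cocycle: τⁿ(a₁, …, aₙ, a₀) = (−1)ⁿ τⁿ(a₀, …, aₙ) (i.e. τⁿ ∈ C^n_λ(A)) and bτⁿ = 0, so τⁿ ∈ Z^n_λ(A). -/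

import Mathlib

open scoped ENNReal

noncomputable section

variable {H : Type*} [NormedAddCommGroup H] [InnerProductSpace ℂ H] [CompleteSpace H]
variable {A : Type*} [NonUnitalRing A] [Module ℂ A] [SMulCommClass ℂ A A] [IsScalarTower ℂ A A]

/-- The `n`-th singular value of a (compact) operator `T` (approximation numbers). -/
def sval (T : H →L[ℂ] H) (n : ℕ) : ℝ :=
  sInf {c : ℝ | ∃ R : H →L[ℂ] H,
    Module.rank ℂ (LinearMap.range (R : H →ₗ[ℂ] H)) ≤ (n : Cardinal) ∧ c = ‖T - R‖}

/-- The `p`-Schatten norm `‖T‖_p = (Σ_n s_n(T)^p)^(1/p)`, valued in `ℝ≥0∞`. -/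
def schattenNorm (p : ℝ) (T : H →L[ℂ] H) : ℝ≥0∞ :=
  (∑' n : ℕ, ENNReal.ofReal (sval T n ^ p)) ^ (1 / p)

/-- `T` is a `p`-Schatten operator: compact with finite `p`-Schatten norm. -/
def MemSchatten (p : ℝ) (T : H →L[ℂ] H) : Prop :=
  IsCompactOperator (⇑T) ∧ schattenNorm p T < ⊤

/-- The trace of an operator, computed in a (choice of) Hilbert basis of `H`. -/
def opTrace (T : H →L[ℂ] H) : ℂ :=
  ∑' i : (exists_hilbertBasis ℂ H).choose,
    @inner ℂ H _ ((exists_hilbertBasis ℂ H).choose_spec.choose i)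
      (T ((exists_hilbertBasis ℂ H).choose_spec.choose i))

/-- The even part of `θ` with respect to the grading `ε`. -/
def evenPart (ε θ : H →L[ℂ] H) : H →L[ℂ] H := (2 : ℂ)⁻¹ • (θ + ε * θ * ε)

/-- The odd part of `θ` with respect to the grading `ε`. -/
def oddPart (ε θ : H →L[ℂ] H) : H →L[ℂ] H := (2 : ℂ)⁻¹ • (θ - ε * θ * ε)

/-- The graded commutator `[F, θ]`, extended additively from homogeneous operators. -/
def gComm (ε F θ : H →L[ℂ] H) : H →L[ℂ] H :=
  (F * evenPart ε θ - evenPart ε θ * F) + (F * oddPart ε θ + oddPart ε θ * F)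

/-- The graded trace `Tr_s(θ) := (1/2)·Trace(εF[F,θ])`. -/
def Trs (ε F θ : H →L[ℂ] H) : ℂ := (2 : ℂ)⁻¹ * opTrace (ε * F * gComm ε F θ)

/-- `dT = i(FT - TF)` for an even operator `T`. -/
def dOp (F T : H →L[ℂ] H) : H →L[ℂ] H := Complex.I • (F * T - T * F)

/-- The ordered product `f s * f (s+1) * ⋯ * f (s+k-1)` of operators. -/
def opList (f : ℕ → H →L[ℂ] H) (s k : ℕ) : H →L[ℂ] H := ((List.range' s k).map f).prod

/-- The operator `ρ(a₀)·dρ(a₁)⋯dρ(a_k)`. -/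
def charOp (ρf : A → H →L[ℂ] H) (F : H →L[ℂ] H) (k : ℕ) (a : Fin (k + 1) → A) :
    H →L[ℂ] H :=
  ρf (a 0) *
    opList (fun j => dOp F (ρf (a ⟨j % (k + 1), Nat.mod_lt _ (Nat.succ_pos k)⟩))) 1 k

/-- The `k`-dimensional character `τ(a₀,…,a_k) = (2iπ)^mm · mm! · Tr_s(ρ(a₀)dρ(a₁)⋯dρ(a_k))`. -/
def tauChar (ρf : A → H →L[ℂ] H) (ε F : H →L[ℂ] H) (mm k : ℕ) (a : Fin (k + 1) → A) : ℂ :=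
  (2 * Complex.I * (Real.pi : ℂ)) ^ mm * (Nat.factorial mm : ℂ) * Trs ε F (charOp ρf F k a)

/-- The Hochschild coboundary `b` on `(k+1)`-linear functionals. -/
def hochB {A : Type*} [Mul A] (k : ℕ) (ψ : (Fin (k + 1) → A) → ℂ) :
    (Fin (k + 2) → A) → ℂ := fun a =>
  (∑ i : Fin (k + 1), (-1 : ℂ) ^ (i : ℕ) *
    ψ (fun j => if (j : ℕ) < (i : ℕ) then a j.castSucc
        else if (j : ℕ) = (i : ℕ) then a j.castSucc * a j.succ
        else a j.succ)) +
  (-1 : ℂ) ^ (k + 1) * ψ (fun j => if (j : ℕ) = 0 then a (Fin.last (k + 1)) * a 0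
    else a j.castSucc)

set_option linter.unusedSectionVars false

/-! ### Approximation numbers -/

lemma sval_le (T R : H →L[ℂ] H) (n : ℕ)
    (hR : Module.rank ℂ (LinearMap.range (R : H →ₗ[ℂ] H)) ≤ (n : Cardinal)) :
    sval T n ≤ ‖T - R‖ := by
  refine csInf_le ⟨0, ?_⟩ ⟨R, hR, rfl⟩
  rintro c ⟨R, -, rfl⟩
  exact norm_nonneg _

lemma sval_set_nonempty (T : H →L[ℂ] H) (n : ℕ) : {c : ℝ | ∃ R : H →L[ℂ] H,
    Module.rank ℂ (LinearMap.range (R : H →ₗ[ℂ] H)) ≤ (n : Cardinal) ∧ c = ‖T - R‖}.Nonempty :=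
  ⟨‖T - 0‖, 0, by simp, rfl⟩

lemma sval_nonneg (T : H →L[ℂ] H) (n : ℕ) : 0 ≤ sval T n := by
  refine Real.sInf_nonneg ?_
  rintro c ⟨R, -, rfl⟩
  exact norm_nonneg _

lemma sval_approx (T : H →L[ℂ] H) (n : ℕ) (e : ℝ) (he : 0 < e) :
    ∃ R : H →L[ℂ] H, Module.rank ℂ (LinearMap.range (R : H →ₗ[ℂ] H)) ≤ (n : Cardinal) ∧
      ‖T - R‖ < sval T n + e := by
  obtain ⟨c, ⟨R, hR, rfl⟩, hc⟩ := Real.lt_sInf_add_pos (sval_set_nonempty T n) he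
  exact ⟨R, hR, hc⟩

lemma sval_antitone (T : H →L[ℂ] H) : Antitone (sval T) := by
  intro m n hmn
  refine le_csInf (sval_set_nonempty T m) ?_
  rintro c ⟨R, hR, rfl⟩
  exact sval_le T R n (hR.trans (by exact_mod_cast hmn))

lemma sval_le_norm (T : H →L[ℂ] H) (n : ℕ) : sval T n ≤ ‖T‖ := by
  simpa using sval_le T 0 n (by simp)

lemma sval_mul (S T : H →L[ℂ] H) (j k : ℕ) : sval (S * T) (j + k) ≤ sval S j * sval T k := by
  have key : ∀ e : ℝ, 0 < e → sval (S * T) (j + k) ≤ (sval S j + e) * (sval T k + e) := by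
    intro e he
    obtain ⟨R, hR, hR'⟩ := sval_approx S j e he
    obtain ⟨Q, hQ, hQ'⟩ := sval_approx T k e he
    have h1 : sval (S * T) (j + k) ≤ ‖S * T - (R * (T - Q) + S * Q)‖ := by
      apply sval_le
      have e1 : ((R * (T - Q) + S * Q : H →L[ℂ] H) : H →ₗ[ℂ] H) =
        (R : H →ₗ[ℂ] H) ∘ₗ ((T - Q : H →L[ℂ] H) : H →ₗ[ℂ] H) +
          (S : H →ₗ[ℂ] H) ∘ₗ (Q : H →ₗ[ℂ] H) := rfl
      rw [e1]
      refine (LinearMap.rank_add_le _ _).trans ?_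
      push_cast
      exact add_le_add ((LinearMap.rank_comp_le_left _ _).trans hR)
        ((LinearMap.rank_comp_le_right _ _).trans hQ)
    have h2 : S * T - (R * (T - Q) + S * Q) = (S - R) * (T - Q) := by noncomm_ring
    rw [h2] at h1
    refine h1.trans ((norm_mul_le _ _).trans ?_)
    exact mul_le_mul hR'.le hQ'.le (norm_nonneg _) (add_nonneg (sval_nonneg _ _) he.le)
  have hc : Filter.Tendsto (fun e : ℝ => (sval S j + e) * (sval T k + e)) (nhdsWithin 0 (Set.Ioi 0))
      (nhds ((sval S j + 0) * (sval T k + 0))) :=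
    (Continuous.tendsto (by fun_prop) 0).mono_left nhdsWithin_le_nhds
  simp only [add_zero] at hc
  refine ge_of_tendsto hc ?_
  filter_upwards [self_mem_nhdsWithin] with e he using key e he

/-- Summability of the `p`-th powers of the approximation numbers. -/
def SummS (p : ℕ) (T : H →L[ℂ] H) : Prop := Summable (fun k => sval T k ^ p)

lemma SummS.left {p : ℕ} {T : H →L[ℂ] H} (h : SummS p T) (S : H →L[ℂ] H) : SummS p (S * T) := by
  refine Summable.of_nonneg_of_le (fun k => pow_nonneg (sval_nonneg _ _) _) (fun k => ?_)
    (h.mul_left (‖S‖ ^ p))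
  rw [← mul_pow]
  have := sval_mul S T 0 k
  rw [zero_add] at this
  exact pow_le_pow_left₀ (sval_nonneg _ _) (this.trans
    (mul_le_mul_of_nonneg_right (sval_le_norm _ _) (sval_nonneg _ _))) _

lemma summS_of_memSchatten {p : ℕ} (hp : 0 < p) {T : H →L[ℂ] H}
    (h : MemSchatten (p : ℝ) T) : SummS p T := by
  have h1 := h.2
  unfold schattenNorm at h1
  have hp' : (0 : ℝ) < 1 / (p : ℝ) := by positivity
  rw [ENNReal.rpow_lt_top_iff_of_pos hp'] at h1
  have h2 := ENNReal.summable_toReal h1.ne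
  refine h2.congr (fun k => ?_)
  rw [ENNReal.toReal_ofReal (Real.rpow_nonneg (sval_nonneg _ _) _), Real.rpow_natCast]

lemma schattenNorm_one_lt_top {T : H →L[ℂ] H} (h : SummS 1 T) : schattenNorm 1 T < ⊤ := by
  unfold schattenNorm
  rw [ENNReal.rpow_lt_top_iff_of_pos (by norm_num)]
  simp only [Real.rpow_one]
  have h' : Summable (sval T) := by simpa [SummS] using h
  rw [← ENNReal.ofReal_tsum_of_nonneg (sval_nonneg T) h']
  exact ENNReal.ofReal_lt_top

lemma opList_succ (f : ℕ → H →L[ℂ] H) (s k : ℕ) :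
    opList f s (k + 1) = f s * opList f (s + 1) k := by
  simp [opList, List.range'_succ]

lemma opList_zero (f : ℕ → H →L[ℂ] H) (s : ℕ) : opList f s 0 = 1 := by
  simp [opList]

lemma opList_one (f : ℕ → H →L[ℂ] H) (s : ℕ) : opList f s 1 = f s := by
  simp [opList]

lemma opList_add (f : ℕ → H →L[ℂ] H) (s k l : ℕ) :
    opList f s (k + l) = opList f s k * opList f (s + k) l := by
  induction k generalizing s with
  | zero => simp [opList_zero]
  | succ k ih =>
    rw [show k + 1 + l = (k + l) + 1 by ring, opList_succ, opList_succ, ih, mul_assoc,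
      show s + 1 + k = s + (k + 1) by ring]

lemma opList_congr (f g : ℕ → H →L[ℂ] H) (s t k : ℕ) (h : ∀ j < k, f (s + j) = g (t + j)) :
    opList f s k = opList g t k := by
  induction k generalizing s t with
  | zero => simp [opList_zero]
  | succ k ih =>
    rw [opList_succ, opList_succ, ih (s + 1) (t + 1)]
    · rw [show f s = g t from h 0 (by omega)]
    · intro j hj
      have := h (j + 1) (by omega)
      rwa [show s + 1 + j = s + (j + 1) by ring, show t + 1 + j = t + (j + 1) by ring]

lemma sval_opList (f : ℕ → H →L[ℂ] H) (s k j : ℕ) :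
    sval (opList f s k) (k * j) ≤ ∏ i ∈ Finset.range k, sval (f (s + i)) j := by
  induction k generalizing s with
  | zero =>
    simp only [opList_zero, Finset.range_zero, Finset.prod_empty]
    exact (sval_le_norm _ _).trans (ContinuousLinearMap.norm_id_le)
  | succ k ih =>
    rw [opList_succ, Finset.prod_range_succ', show (k + 1) * j = j + k * j by ring]
    refine (sval_mul _ _ _ _).trans (le_trans ?_ (mul_comm _ _).le)
    rw [add_zero]
    refine mul_le_mul_of_nonneg_left ((ih (s + 1)).trans (le_of_eq ?_)) (sval_nonneg _ _)
    refine Finset.prod_congr rfl (fun i _ => ?_)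
    rw [show s + 1 + i = s + (i + 1) by ring]

lemma prod_le_sum_pow (N : ℕ) (hN : 0 < N) (x : ℕ → ℝ) (hx : ∀ i, 0 ≤ x i) :
    ∏ i ∈ Finset.range N, x i ≤ ∑ i ∈ Finset.range N, x i ^ N := by
  obtain ⟨M, hM, hmax⟩ := Finset.exists_max_image (Finset.range N) x ⟨0, by simpa using hN⟩
  calc ∏ i ∈ Finset.range N, x i ≤ ∏ i ∈ Finset.range N, x M :=
        Finset.prod_le_prod (fun i _ => hx i) hmax
    _ = x M ^ N := by simp
    _ ≤ _ := Finset.single_le_sum (f := fun i => x i ^ N) (fun i _ => pow_nonneg (hx i) N) hM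

lemma summable_of_mul (g : ℕ → ℝ) (hg : Antitone g) (N : ℕ) (hN : 0 < N)
    (h : Summable (fun j => g (N * j))) : Summable g := by
  have : NeZero N := ⟨hN.ne'⟩
  rw [← summable_indicator_mod_iff (m := N) hg 0]
  have hi : Function.Injective (fun j : ℕ => N * j) := fun a b hab => Nat.eq_of_mul_eq_mul_left hN hab
  rw [← hi.summable_iff]
  · refine h.congr (fun j => ?_)
    simp [Set.indicator]
  · intro x hx
    rw [Set.indicator_of_notMem]
    intro hx'
    apply hx
    rw [Set.mem_ofPred_eq, ZMod.natCast_eq_zero_iff] at hx'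
    obtain ⟨j, rfl⟩ := hx'
    exact ⟨j, rfl⟩

/-- Hölder: a product of `N` operators in the `N`-th Schatten class is trace class. -/
lemma summS_opList (N : ℕ) (hN : 0 < N) (f : ℕ → H →L[ℂ] H) (s : ℕ)
    (hf : ∀ j < N, SummS N (f (s + j))) : SummS 1 (opList f s N) := by
  have : Summable (sval (opList f s N)) := by
    refine summable_of_mul _ (sval_antitone _) N hN ?_
    refine Summable.of_nonneg_of_le (fun j => sval_nonneg _ _) (fun j => (sval_opList f s N j).trans
      (prod_le_sum_pow N hN (fun i => sval (f (s + i)) j) (fun i => sval_nonneg _ _))) ?_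
    exact summable_sum (fun i hi => hf i (Finset.mem_range.1 hi))
  simpa [SummS] using this

/-! ### Nuclear operators and their trace -/

open scoped InnerProductSpace

/-- Nuclear operators: absolutely convergent sums of rank one operators. -/
def Nuc (T : H →L[ℂ] H) : Prop :=
  ∃ (ι : Type) (x y : ι → H), Summable (fun i => ‖x i‖ * ‖y i‖) ∧
    ∀ v, HasSum (fun i => ⟪y i, v⟫_ℂ • x i) (T v)

lemma Nuc.left {T : H →L[ℂ] H} (h : Nuc T) (S : H →L[ℂ] H) : Nuc (S * T) := by
  obtain ⟨ι, x, y, hs, hT⟩ := h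
  refine ⟨ι, fun i => S (x i), y, ?_, fun v => ?_⟩
  · refine Summable.of_nonneg_of_le (fun i => by positivity) (fun i => ?_) (hs.mul_left ‖S‖)
    rw [← mul_assoc]
    exact mul_le_mul_of_nonneg_right (S.le_opNorm _) (norm_nonneg _)
  · have := (hT v).mapL S
    simpa using this

lemma Nuc.right {T : H →L[ℂ] H} (h : Nuc T) (S : H →L[ℂ] H) : Nuc (T * S) := by
  obtain ⟨ι, x, y, hs, hT⟩ := h
  refine ⟨ι, x, fun i => ContinuousLinearMap.adjoint S (y i), ?_, fun v => ?_⟩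
  · refine Summable.of_nonneg_of_le (fun i => by positivity) (fun i => ?_)
      (hs.mul_left ‖ContinuousLinearMap.adjoint S‖)
    rw [mul_left_comm]
    exact mul_le_mul_of_nonneg_left (ContinuousLinearMap.le_opNorm _ _) (norm_nonneg _)
  · simpa [ContinuousLinearMap.adjoint_inner_left] using hT (S v)

/-- The trace of a nuclear operator in a Hilbert basis. -/
lemma hasSum_trace_aux {κ : Type*} (b : HilbertBasis κ ℂ H) {ι : Type} (x y : ι → H)
    (hs : Summable (fun i => ‖x i‖ * ‖y i‖)) (T : H →L[ℂ] H)
    (hT : ∀ v, HasSum (fun i => ⟪y i, v⟫_ℂ • x i) (T v)) :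
    HasSum (fun k => ⟪b k, T (b k)⟫_ℂ) (∑' i, ⟪y i, x i⟫_ℂ) := by
  let f : ι × κ → ℂ := fun p => ⟪y p.1, b p.2⟫_ℂ * ⟪b p.2, x p.1⟫_ℂ
  have hfib : ∀ i, HasSum (fun k => f (i, k)) ⟪y i, x i⟫_ℂ := fun i =>
    b.hasSum_inner_mul_inner (y i) (x i)
  have hbes : ∀ z : H, Summable (fun k => ‖⟪b k, z⟫_ℂ‖ ^ 2) := fun z =>
    b.orthonormal.inner_products_summable z
  have hbes' : ∀ z : H, ∑' k, ‖⟪b k, z⟫_ℂ‖ ^ 2 ≤ ‖z‖ ^ 2 := fun z =>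
    b.orthonormal.tsum_inner_products_le z
  have hbound : ∀ i, ∀ s : Finset κ, ∑ k ∈ s, ‖f (i, k)‖ ≤ ‖x i‖ * ‖y i‖ := by
    intro i s
    have h1 : (∑ k ∈ s, ‖f (i, k)‖) ^ 2 ≤ (‖x i‖ * ‖y i‖) ^ 2 := by
      have e : ∀ k, ‖f (i, k)‖ = ‖⟪b k, y i⟫_ℂ‖ * ‖⟪b k, x i⟫_ℂ‖ := by
        intro k
        simp only [f, norm_mul]
        rw [norm_inner_symm]
      simp only [e]
      refine (Finset.sum_mul_sq_le_sq_mul_sq _ _ _).trans ?_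
      rw [mul_pow, mul_comm (‖x i‖ ^ 2)]
      exact mul_le_mul (b.orthonormal.sum_inner_products_le (y i))
        (b.orthonormal.sum_inner_products_le (x i))
        (Finset.sum_nonneg (fun _ _ => by positivity)) (by positivity)
    exact le_of_sq_le_sq h1 (by positivity)
  have hsn : ∀ i, Summable (fun k => ‖f (i, k)‖) := fun i =>
    summable_of_sum_le (fun _ => norm_nonneg _) (hbound i)
  have hf : Summable f := by
    refine Summable.of_norm ?_
    rw [summable_prod_of_nonneg (fun _ => norm_nonneg _)]
    refine ⟨hsn, Summable.of_nonneg_of_le (fun i => tsum_nonneg (fun _ => norm_nonneg _))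
      (fun i => ?_) hs⟩
    exact (hsn i).tsum_le_of_sum_le (hbound i)
  have h1 : HasSum f (∑' i, ⟪y i, x i⟫_ℂ) := by
    have := hf.hasSum
    have h2 := this.prod_fiberwise hfib
    rw [h2.tsum_eq]
    exact this
  have h3 : HasSum (f ∘ Prod.swap) (∑' i, ⟪y i, x i⟫_ℂ) :=
    (Equiv.prodComm κ ι).hasSum_iff.2 h1
  refine h3.prod_fiberwise (fun k => ?_)
  have := (hT (b k)).mapL (innerSL ℂ (b k))
  simpa [f, inner_smul_right] using this

/-- The trace computed in the chosen Hilbert basis agrees with that in any other one. -/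
lemma Nuc.hasSum_trace {T : H →L[ℂ] H} (h : Nuc T) {κ : Type*} (b : HilbertBasis κ ℂ H) :
    HasSum (fun k => ⟪b k, T (b k)⟫_ℂ) (opTrace T) := by
  obtain ⟨ι, x, y, hs, hT⟩ := h
  have h1 := hasSum_trace_aux b x y hs T hT
  have h2 := hasSum_trace_aux (exists_hilbertBasis ℂ H).choose_spec.choose x y hs T hT
  have h3 : opTrace T = ∑' i, ⟪y i, x i⟫_ℂ := h2.tsum_eq
  rwa [h3]

lemma Nuc.trace_add {S T : H →L[ℂ] H} (hS : Nuc S) (hT : Nuc T) :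
    opTrace (S + T) = opTrace S + opTrace T := by
  have h := (hS.hasSum_trace (exists_hilbertBasis ℂ H).choose_spec.choose).add
    (hT.hasSum_trace (exists_hilbertBasis ℂ H).choose_spec.choose)
  rw [← h.tsum_eq]
  unfold opTrace
  refine tsum_congr (fun i => ?_)
  rw [← inner_add_right]
  rfl

lemma opTrace_smul (c : ℂ) (T : H →L[ℂ] H) : opTrace (c • T) = c * opTrace T := by
  unfold opTrace
  rw [← tsum_mul_left]
  refine tsum_congr (fun i => ?_)
  rw [← inner_smul_right]
  rfl

lemma opTrace_neg (T : H →L[ℂ] H) : opTrace (-T) = - opTrace T := by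
  simpa using opTrace_smul (-1) T

lemma finrank_decomp (R : H →L[ℂ] H) (r : ℕ)
    (hR : Module.rank ℂ (LinearMap.range (R : H →ₗ[ℂ] H)) ≤ (r : Cardinal)) :
    ∃ (d : ℕ) (x y : Fin d → H), d ≤ r ∧ (∀ i, ‖x i‖ * ‖y i‖ ≤ ‖R‖) ∧
      ∀ v, R v = ∑ i, ⟪y i, v⟫_ℂ • x i := by
  set V := LinearMap.range (R : H →ₗ[ℂ] H) with hV
  have hfin : FiniteDimensional ℂ V :=
    Module.rank_lt_aleph0_iff.1 (lt_of_le_of_lt hR (Cardinal.natCast_lt_aleph0))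
  let b := stdOrthonormalBasis ℂ V
  refine ⟨Module.finrank ℂ V, fun i => (b i : H), fun i => ContinuousLinearMap.adjoint R (b i : H),
    Module.finrank_le_of_rank_le hR, fun i => ?_, fun v => ?_⟩
  · have h1 : ‖(b i : H)‖ = 1 := b.orthonormal.1 i
    rw [h1, one_mul]
    refine (ContinuousLinearMap.le_opNorm _ _).trans ?_
    rw [h1, mul_one, LinearIsometryEquiv.norm_map]
  · have := b.sum_repr' ⟨R v, ⟨v, rfl⟩⟩
    have h2 := congrArg (Subtype.val) this
    simp only [Submodule.coe_inner, AddSubmonoidClass.coe_finsetSum, Submodule.coe_smul] at h2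
    rw [← h2]
    refine Finset.sum_congr rfl (fun i _ => ?_)
    rw [ContinuousLinearMap.adjoint_inner_left]

lemma nuc_of_hasSum (D : ℕ → H →L[ℂ] H) (r : ℕ → ℕ) (T : H →L[ℂ] H)
    (hr : ∀ k, Module.rank ℂ (LinearMap.range (D k : H →ₗ[ℂ] H)) ≤ (r k : Cardinal))
    (hs : Summable (fun k => (r k : ℝ) * ‖D k‖)) (hT : HasSum D T) : Nuc T := by
  choose d x y hd hxy hD using fun k => finrank_decomp (D k) (r k) (hr k)
  have hsum : Summable (fun p : (Σ k, Fin (d k)) => ‖x p.1 p.2‖ * ‖y p.1 p.2‖) := by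
    rw [summable_sigma_of_nonneg (fun _ => by positivity)]
    refine ⟨fun k => Summable.of_finite, Summable.of_nonneg_of_le
      (fun k => tsum_nonneg (fun _ => by positivity)) (fun k => ?_) hs⟩
    rw [tsum_fintype]
    refine (Finset.sum_le_sum (fun i _ => hxy k i)).trans ?_
    simp only [Finset.sum_const, Finset.card_univ, Fintype.card_fin, nsmul_eq_mul]
    exact mul_le_mul_of_nonneg_right (by exact_mod_cast hd k) (norm_nonneg _)
  refine ⟨Σ k, Fin (d k), fun p => x p.1 p.2, fun p => y p.1 p.2, hsum, fun v => ?_⟩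
  have h1 : HasSum (fun k => D k v) (T v) := hT.mapL (ContinuousLinearMap.apply ℂ H v)
  refine h1.sigma_of_hasSum (fun k => ?_) ?_
  · rw [hD k v]
    exact hasSum_fintype _
  · refine Summable.of_norm (Summable.of_nonneg_of_le (fun _ => norm_nonneg _) (fun p => ?_)
      (hsum.mul_right ‖v‖))
    rw [norm_smul]
    calc ‖⟪y p.1 p.2, v⟫_ℂ‖ * ‖x p.1 p.2‖ ≤ (‖y p.1 p.2‖ * ‖v‖) * ‖x p.1 p.2‖ :=
          mul_le_mul_of_nonneg_right (norm_inner_le_norm _ _) (norm_nonneg _)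
      _ = _ := by ring

lemma nuc_of_summS {T : H →L[ℂ] H} (h : SummS 1 T) : Nuc T := by
  have h' : Summable (sval T) := by simpa [SummS] using h
  have hcond : Summable (fun k : ℕ => (2 : ℝ) ^ k * sval T (2 ^ k)) :=
    (summable_condensed_iff_of_nonneg (sval_nonneg T)
      (fun m n _ hmn => sval_antitone T hmn)).2 h'
  choose R hR hR' using fun k : ℕ => sval_approx T (2 ^ k) ((1 / 4) ^ k) (by positivity)
  obtain ⟨D, hD0, hDs⟩ : ∃ D : ℕ → H →L[ℂ] H, D 0 = R 0 ∧ ∀ j, D (j + 1) = R (j + 1) - R j :=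
    ⟨fun k => Nat.casesOn k (R 0) (fun j => R (j + 1) - R j), rfl, fun _ => rfl⟩
  have hpart : ∀ k, ∑ i ∈ Finset.range (k + 1), D i = R k := by
    intro k
    induction k with
    | zero => simp [hD0]
    | succ k ih => rw [Finset.sum_range_succ, ih]; simp [hDs]
  have hgeo : Summable (fun k : ℕ => (2 : ℝ) ^ k * (1 / 4) ^ k) := by
    have : Summable (fun k : ℕ => (1 / 2 : ℝ) ^ k) := summable_geometric_two
    refine this.congr (fun k => ?_)
    rw [← mul_pow]; norm_num
  have hRT : Filter.Tendsto R Filter.atTop (nhds T) := by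
    rw [tendsto_iff_norm_sub_tendsto_zero]
    have ht : Filter.Tendsto (fun k : ℕ => (2 : ℝ) ^ k * sval T (2 ^ k) + (2 : ℝ) ^ k * (1 / 4) ^ k)
        Filter.atTop (nhds 0) := by
      simpa using hcond.tendsto_atTop_zero.add hgeo.tendsto_atTop_zero
    refine squeeze_zero (fun _ => norm_nonneg _) (fun k => ?_) ht
    rw [norm_sub_rev, ← mul_add]
    refine (hR' k).le.trans (le_mul_of_one_le_left ?_ (one_le_pow₀ (by norm_num)))
    exact add_nonneg (sval_nonneg _ _) (by positivity)
  have hrank : ∀ k, Module.rank ℂ (LinearMap.range (D k : H →ₗ[ℂ] H)) ≤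
      ((2 ^ (k + 1) : ℕ) : Cardinal) := by
    intro k
    cases k with
    | zero => rw [hD0]; exact (hR 0).trans (by norm_num)
    | succ j =>
      have e : (D (j + 1) : H →ₗ[ℂ] H) = (R (j + 1) : H →ₗ[ℂ] H) + ((-R j : H →L[ℂ] H) : H →ₗ[ℂ] H) := by
        ext v; simp [hDs, sub_eq_add_neg]
      rw [e]
      refine (LinearMap.rank_add_le _ _).trans ?_
      have e2 : LinearMap.range ((-R j : H →L[ℂ] H) : H →ₗ[ℂ] H) =
          LinearMap.range (R j : H →ₗ[ℂ] H) := LinearMap.range_neg (R j : H →ₗ[ℂ] H)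
      have h2 : LinearMap.rank ((-R j : H →L[ℂ] H) : H →ₗ[ℂ] H) ≤ ((2 ^ j : ℕ) : Cardinal) := by
        unfold LinearMap.rank
        rw [e2]; exact hR j
      refine (add_le_add (hR (j + 1)) h2).trans ?_
      norm_cast
      have : 0 < 2 ^ j := by positivity
      rw [pow_succ, pow_succ, pow_succ]; omega
  have hsD : Summable (fun k => ((2 ^ (k + 1) : ℕ) : ℝ) * ‖D k‖) := by
    rw [← summable_nat_add_iff 1]
    refine Summable.of_nonneg_of_le (fun _ => by positivity) (fun j => ?_)
      ((hcond.add hgeo).mul_left 8)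
    have hn : ‖D (j + 1)‖ ≤ 2 * (sval T (2 ^ j) + (1 / 4) ^ j) := by
      have e : D (j + 1) = (T - R j) - (T - R (j + 1)) := by simp [hDs]
      rw [e]
      refine (norm_sub_le _ _).trans ?_
      have h1 := (hR' j).le
      have h2 := (hR' (j + 1)).le
      have h3 : sval T (2 ^ (j + 1)) ≤ sval T (2 ^ j) :=
        sval_antitone T (Nat.pow_le_pow_right (by norm_num) (by omega))
      have h4 : (1 / 4 : ℝ) ^ (j + 1) ≤ (1 / 4) ^ j := by
        rw [pow_succ]
        have : (0 : ℝ) ≤ (1 / 4) ^ j := by positivity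
        linarith
      linarith
    calc ((2 ^ (j + 1 + 1) : ℕ) : ℝ) * ‖D (j + 1)‖
        ≤ ((2 ^ (j + 1 + 1) : ℕ) : ℝ) * (2 * (sval T (2 ^ j) + (1 / 4) ^ j)) :=
          mul_le_mul_of_nonneg_left hn (by positivity)
      _ = _ := by push_cast; ring
  refine nuc_of_hasSum D (fun k => 2 ^ (k + 1)) T hrank hsD ?_
  have hsumm : Summable D := by
    refine Summable.of_norm (Summable.of_nonneg_of_le (fun _ => norm_nonneg _) (fun k => ?_) hsD)
    refine le_mul_of_one_le_left (norm_nonneg _) ?_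
    exact_mod_cast Nat.one_le_two_pow
  have h1 := hsumm.hasSum
  have h2 := (h1.tendsto_sum_nat.comp (Filter.tendsto_add_atTop_nat 1))
  have h3 : Filter.Tendsto R Filter.atTop (nhds (∑' k, D k)) := by
    refine h2.congr (fun k => ?_)
    exact hpart k
  rwa [tendsto_nhds_unique h3 hRT] at h1

/-! ### Cyclicity of the trace -/

lemma exists_eigenbasis_aux.{u} {E : Type u} [NormedAddCommGroup E] [InnerProductSpace ℂ E]
    [CompleteSpace E] (T : E →L[ℂ] E) (hTc : IsCompactOperator (⇑T)) (hTs : T.IsSymmetric) :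
    ∃ (κ : Type u) (b : HilbertBasis κ ℂ E) (μ : κ → ℂ), ∀ k, T (b k) = μ k • b k := by
  have hbot := ContinuousLinearMap.orthogonalComplement_iSup_eigenspaces_eq_bot hTc hTs
  have hcl : ∀ μ : ℂ, CompleteSpace (Module.End.eigenspace (T : Module.End ℂ E) μ) := by
    intro μ
    have : IsClosed ((Module.End.eigenspace (T : Module.End ℂ E) μ : Submodule ℂ E) : Set E) := by
      have e : ((Module.End.eigenspace (T : Module.End ℂ E) μ : Submodule ℂ E) : Set E) =
          {x | T x = μ • x} := by
        ext x; simp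
      rw [e]
      exact isClosed_eq T.continuous (continuous_const_smul μ)
    exact this.completeSpace_coe
  choose w b hb using fun μ : ℂ =>
    exists_hilbertBasis ℂ (Module.End.eigenspace (T : Module.End ℂ E) μ)
  have hortho : Orthonormal ℂ (fun p : (Σ μ : ℂ, w μ) => ((b p.1 p.2 : _) : E)) :=
    (hTs.orthogonalFamily_eigenspaces).orthonormal_sigma_orthonormal
      (v_family := fun μ k => b μ k) (fun μ => (b μ).orthonormal)
  have hspan : (Submodule.span ℂ (Set.range (fun p : (Σ μ : ℂ, w μ) => ((b p.1 p.2 : _) : E))))ᗮ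
      = ⊥ := by
    rw [eq_bot_iff, ← hbot]
    intro x hx
    have hle : (⨆ μ, Module.End.eigenspace (T : Module.End ℂ E) μ) ≤ (ℂ ∙ x)ᗮ := by
      refine iSup_le (fun μ z hz => ?_)
      rw [Submodule.mem_orthogonal_singleton_iff_inner_right]
      have h1 := ((b μ).hasSum_repr ⟨z, hz⟩).mapL
        ((innerSL ℂ x).comp (Submodule.subtypeL _))
      have h2 : ∀ k, ⟪x, ((b μ k : _) : E)⟫_ℂ = 0 := by
        intro k
        rw [Submodule.mem_orthogonal'] at hx
        exact hx _ (Submodule.subset_span ⟨⟨μ, k⟩, rfl⟩)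
      have h3 : HasSum (fun _ : w μ => (0 : ℂ)) ⟪x, z⟫_ℂ := by
        refine (h1.congr_fun ?_)
        intro k
        simp [h2]
      exact h3.unique hasSum_zero
    rw [Submodule.mem_orthogonal]
    intro u hu
    have := hle hu
    rwa [Submodule.mem_orthogonal_singleton_iff_inner_left] at this
  refine ⟨(Σ μ : ℂ, w μ), HilbertBasis.mkOfOrthogonalEqBot hortho hspan, fun p => p.1, ?_⟩
  rw [HilbertBasis.coe_mkOfOrthogonalEqBot]
  rintro ⟨μ, k⟩
  exact Module.End.mem_eigenspace_iff.1 (b μ k).2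

lemma exists_eigenbasis.{u} {E : Type u} [NormedAddCommGroup E] [InnerProductSpace ℂ E]
    [CompleteSpace E] (B : E →L[ℂ] E) (hB : IsCompactOperator (⇑B)) :
    ∃ (κ : Type u) (b : HilbertBasis κ ℂ E),
      ∀ k, ContinuousLinearMap.adjoint B (B (b k)) = ((‖B (b k)‖ : ℂ) ^ 2) • b k := by
  obtain ⟨κ, b, μ, hb⟩ := exists_eigenbasis_aux (ContinuousLinearMap.adjoint B * B)
    (hB.clm_comp (ContinuousLinearMap.adjoint B))
    ((ContinuousLinearMap.isSelfAdjoint_iff_isSymmetric).1 (IsSelfAdjoint.star_mul_self B))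
  refine ⟨κ, b, fun k => ?_⟩
  have h1 : ContinuousLinearMap.adjoint B (B (b k)) = μ k • b k := hb k
  have h2 : ‖b k‖ = 1 := b.orthonormal.1 k
  have h3 : ((‖B (b k)‖ : ℂ) ^ 2) = μ k := by
    have e1 : ⟪b k, ContinuousLinearMap.adjoint B (B (b k))⟫_ℂ = (‖B (b k)‖ : ℂ) ^ 2 := by
      rw [ContinuousLinearMap.adjoint_inner_right, inner_self_eq_norm_sq_to_K]; rfl
    rw [← e1, h1, inner_smul_right, inner_self_eq_norm_sq_to_K, h2]
    simp
  rw [h3]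
  exact h1

lemma trace_comm (A' B : H →L[ℂ] H) (hB : IsCompactOperator (⇑B)) (hAB : Nuc (A' * B))
    (hBA : Nuc (B * A')) : opTrace (A' * B) = opTrace (B * A') := by
  obtain ⟨κ, b, hb⟩ := exists_eigenbasis B hB
  let I : Set κ := {k | B (b k) ≠ 0}
  have hI : ∀ k : I, ((‖B (b k)‖ : ℂ)) ≠ 0 := fun k => by
    have : B (b k) ≠ 0 := k.2
    simpa using this
  let u : I → H := fun k => ((‖B (b k)‖ : ℂ)⁻¹) • B (b k)
  have hu : Orthonormal ℂ u := by
    constructor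
    · intro k
      have := hI k
      simp only [u, norm_smul, norm_inv, Complex.norm_real, norm_norm]
      have h' : ‖B (b k)‖ ≠ 0 := by exact_mod_cast this
      exact inv_mul_cancel₀ h'
    · intro k l hkl
      simp only [u, inner_smul_left, inner_smul_right]
      rw [← ContinuousLinearMap.adjoint_inner_right, hb, inner_smul_right,
        b.orthonormal.2 (fun h => hkl (Subtype.ext h))]
      simp
  obtain ⟨w, c, hsw, hc⟩ := hu.toSubtypeRange.exists_hilbertBasis_extension
  have hcv : ∀ z : w, c z = (z : H) := fun z => congrFun hc z
  have h1 := hBA.hasSum_trace c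
  let g : I → w := fun k => ⟨u k, hsw ⟨k, rfl⟩⟩
  have hg : Function.Injective g := fun k l hkl =>
    hu.linearIndependent.injective (congrArg Subtype.val hkl)
  rw [← hg.hasSum_iff] at h1
  · have h2 := hAB.hasSum_trace b
    have hsupp : Function.support (fun k => ⟪b k, (A' * B) (b k)⟫_ℂ) ⊆ I := by
      intro k hk hk'
      apply hk
      have : B (b k) = 0 := hk'
      simp [this]
    rw [← hasSum_subtype_iff_of_support_subset hsupp] at h2
    refine h2.unique (h1.congr_fun ?_)
    intro k
    have hk := hI k
    simp only [Function.comp, hcv, g, u, mul_apply_eq_comp, map_smul, inner_smul_left,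
      inner_smul_right]
    rw [← ContinuousLinearMap.adjoint_inner_left B, hb, inner_smul_left]
    simp
    field_simp
  · intro z hz
    have hz1 : ContinuousLinearMap.adjoint B (c z) = 0 := by
      have : ∀ k, ⟪b k, ContinuousLinearMap.adjoint B (c z)⟫_ℂ = 0 := by
        intro k
        rw [ContinuousLinearMap.adjoint_inner_right]
        by_cases hk : B (b k) = 0
        · simp [hk]
        · have h3 : ⟪c (g ⟨k, hk⟩), c z⟫_ℂ = 0 :=
            c.orthonormal.2 (fun h => hz ⟨_, h⟩)
          rw [hcv (g _)] at h3
          simp only [g, u, inner_smul_left] at h3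
          rcases mul_eq_zero.1 h3 with h4 | h4
          · have := hI ⟨k, hk⟩
            simp at h4
            exact absurd h4 hk
          · exact h4
      have h5 := b.hasSum_repr (ContinuousLinearMap.adjoint B (c z))
      simp only [b.repr_apply_apply, this, zero_smul] at h5
      exact h5.unique hasSum_zero
    rw [mul_apply_eq_comp, ← ContinuousLinearMap.adjoint_inner_left, hz1, inner_zero_left]

/-! ### Algebra of the character -/

lemma SummS.right {p : ℕ} {T : H →L[ℂ] H} (h : SummS p T) (S : H →L[ℂ] H) : SummS p (T * S) := by
  refine Summable.of_nonneg_of_le (fun k => pow_nonneg (sval_nonneg _ _) _) (fun k => ?_)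
    (h.mul_right (‖S‖ ^ p))
  rw [← mul_pow]
  have := sval_mul T S k 0
  rw [add_zero] at this
  exact pow_le_pow_left₀ (sval_nonneg _ _) (this.trans
    (mul_le_mul_of_nonneg_left (sval_le_norm _ _) (sval_nonneg _ _))) _

/-- The ordinary commutator with `F`. -/
def delOp (F X : H →L[ℂ] H) : H →L[ℂ] H := F * X - X * F

lemma opList_smul (c : ℂ) (f : ℕ → H →L[ℂ] H) (s k : ℕ) :
    opList (fun j => c • f j) s k = c ^ k • opList f s k := by
  induction k generalizing s with
  | zero => simp [opList_zero]
  | succ k ih => rw [opList_succ, opList_succ, ih, smul_mul_smul_comm, pow_succ']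

lemma opList_anticomm (X : H →L[ℂ] H) (f : ℕ → H →L[ℂ] H) (hf : ∀ j, X * f j = -(f j * X))
    (s k : ℕ) : X * opList f s k = (-1 : ℂ) ^ k • (opList f s k * X) := by
  induction k generalizing s with
  | zero => simp [opList_zero]
  | succ k ih =>
    rw [opList_succ, ← mul_assoc, hf, neg_mul, mul_assoc, ih, pow_succ', mul_smul, mul_smul_comm,
      mul_assoc]
    simp

lemma opList_comm (X : H →L[ℂ] H) (f : ℕ → H →L[ℂ] H) (hf : ∀ j, X * f j = f j * X)
    (s k : ℕ) : X * opList f s k = opList f s k * X := by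
  induction k generalizing s with
  | zero => simp [opList_zero]
  | succ k ih =>
    rw [opList_succ, ← mul_assoc, hf, mul_assoc, ih, mul_assoc]

lemma delOp_F (F X : H →L[ℂ] H) (hF2 : F * F = 1) : F * delOp F X = -(delOp F X * F) := by
  have h1 : F * delOp F X = F * F * X - F * X * F := by unfold delOp; noncomm_ring
  have h2 : delOp F X * F = F * X * F - X * (F * F) := by unfold delOp; noncomm_ring
  rw [h1, h2, hF2]; simp

lemma delOp_eps (ε F X : H →L[ℂ] H) (hFε : F * ε = -(ε * F)) (hX : ε * X = X * ε) :
    ε * delOp F X = -(delOp F X * ε) := by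
  have hεF : ε * F = -(F * ε) := by rw [hFε, neg_neg]
  have h1 : ε * delOp F X = (ε * F) * X - (ε * X) * F := by unfold delOp; noncomm_ring
  have h2 : delOp F X * ε = F * (X * ε) - X * (F * ε) := by unfold delOp; noncomm_ring
  have a1 : (ε * F) * X = -(F * (X * ε)) := by rw [hεF, neg_mul, mul_assoc, hX]
  have a2 : (ε * X) * F = -(X * (F * ε)) := by rw [hX, mul_assoc, hεF, mul_neg]
  rw [h1, h2, a1, a2]
  abel

lemma delOp_G (ε F X : H →L[ℂ] H) (hF2 : F * F = 1) (hFε : F * ε = -(ε * F))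
    (hX : ε * X = X * ε) : (ε * F) * delOp F X = delOp F X * (ε * F) := by
  rw [mul_assoc, delOp_F F X hF2, mul_neg, ← mul_assoc, delOp_eps ε F X hFε hX]
  noncomm_ring

lemma delOp_mul (F X Y : H →L[ℂ] H) : delOp F (X * Y) = delOp F X * Y + X * delOp F Y := by
  unfold delOp; noncomm_ring

lemma gComm_char (m n : ℕ) (hn : n = 2 * m)
    (ε F : H →L[ℂ] H) (hε2 : ε * ε = 1) (hF2 : F * F = 1)
    (hFε : F * ε = -(ε * F)) (ρf : A → H →L[ℂ] H) (heven : ∀ a : A, ε * ρf a = ρf a * ε)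
    (a : Fin (n + 1) → A) :
    gComm ε F (charOp ρf F n a) = Complex.I ^ n •
      opList (fun j => delOp F (ρf (a ⟨j % (n + 1), Nat.mod_lt _ (Nat.succ_pos n)⟩))) 0 (n + 1) := by
  set D : ℕ → H →L[ℂ] H :=
    fun j => delOp F (ρf (a ⟨j % (n + 1), Nat.mod_lt _ (Nat.succ_pos n)⟩)) with hD
  have hpow : (-1 : ℂ) ^ n = 1 := by rw [hn, pow_mul]; simp
  have h1 : charOp ρf F n a = Complex.I ^ n • (ρf (a 0) * opList D 1 n) := by
    rw [← mul_smul_comm, ← opList_smul]; rfl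
  have hFP : F * opList D 1 n = opList D 1 n * F := by
    rw [opList_anticomm F D (fun j => delOp_F F _ hF2), hpow, one_smul]
  have hεP : ε * opList D 1 n = opList D 1 n * ε := by
    rw [opList_anticomm ε D (fun j => delOp_eps ε F _ hFε (heven _)), hpow, one_smul]
  have hθ : ε * charOp ρf F n a * ε = charOp ρf F n a := by
    rw [h1, mul_smul_comm, smul_mul_assoc, ← mul_assoc, heven, mul_assoc (ρf (a 0)), hεP,
      ← mul_assoc, mul_assoc _ ε ε, hε2, mul_one]
  have hev : evenPart ε (charOp ρf F n a) = charOp ρf F n a := by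
    unfold evenPart
    rw [hθ, ← two_smul ℂ, smul_smul]; simp
  have hod : oddPart ε (charOp ρf F n a) = 0 := by
    unfold oddPart
    rw [hθ, sub_self, smul_zero]
  unfold gComm
  rw [hev, hod, mul_zero, zero_mul, add_zero, add_zero, h1, mul_smul_comm, smul_mul_assoc,
    ← smul_sub, opList_succ, zero_add, mul_assoc (ρf (a 0)), ← hFP]
  congr 1

lemma tauChar_eq (m n : ℕ) (hn : n = 2 * m)
    (ε F : H →L[ℂ] H) (hε2 : ε * ε = 1) (hF2 : F * F = 1)
    (hFε : F * ε = -(ε * F)) (ρf : A → H →L[ℂ] H) (heven : ∀ a : A, ε * ρf a = ρf a * ε)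
    (a : Fin (n + 1) → A) :
    tauChar ρf ε F m n a = ((2 * Complex.I * (Real.pi : ℂ)) ^ m * (Nat.factorial m : ℂ) *
      ((2 : ℂ)⁻¹ * Complex.I ^ n)) * opTrace (ε * F *
      opList (fun j => delOp F (ρf (a ⟨j % (n + 1), Nat.mod_lt _ (Nat.succ_pos n)⟩)))
        0 (n + 1)) := by
  unfold tauChar Trs
  rw [gComm_char m n hn ε F hε2 hF2 hFε ρf heven a, mul_smul_comm, opTrace_smul]
  ring

lemma alt_sum (X : ℕ → ℂ) (N : ℕ) :
    ∑ i ∈ Finset.range (N + 1), (-1 : ℂ) ^ i * (X (i + 1) + X i) = X 0 + (-1) ^ N * X (N + 1) := by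
  induction N with
  | zero => simp; ring
  | succ N ih => rw [Finset.sum_range_succ, ih]; ring

/-- Let `n = 2m` be a positive even integer, `(H, ε)` ℤ₂-graded, `F` bounded with `F² = 1`,
`Fε = -εF`, `A` a ℂ-algebra and `ρ : A → B(H)` an algebra homomorphism into even operators
with `Fρ(a) - ρ(a)F` being `(n+1)`-Schatten for all `a`.  Then the `(n+1)`-linear functional
`τⁿ(a₀,…,aₙ) = (2iπ)^m m! Tr_s(ρ(a₀)dρ(a₁)⋯dρ(aₙ))` is well defined (the relevant graded
commutator with `F` is trace class) and is a cyclic cocycle: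
`τⁿ(a₁,…,aₙ,a₀) = (-1)ⁿ τⁿ(a₀,…,aₙ)` and `bτⁿ = 0`. -/
theorem tau_cyclic_cocycle (m n : ℕ) (hm : 0 < m) (hn : n = 2 * m)
    (ε F : H →L[ℂ] H) (hε : IsSelfAdjoint ε) (hε2 : ε * ε = 1) (hF2 : F * F = 1)
    (hFε : F * ε = -(ε * F))
    (ρ : A →ₙₐ[ℂ] (H →L[ℂ] H)) (heven : ∀ a : A, ε * ρ a = ρ a * ε)
    (hS : ∀ a : A, MemSchatten ((n : ℝ) + 1) (F * ρ a - ρ a * F)) :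
    (∀ a : Fin (n + 1) → A, MemSchatten 1 (gComm ε F (charOp (⇑ρ) F n a))) ∧
    (∀ a : Fin (n + 1) → A,
      tauChar (⇑ρ) ε F m n (fun i => a (i + 1)) = (-1 : ℂ) ^ n * tauChar (⇑ρ) ε F m n a) ∧
    (∀ a : Fin (n + 2) → A, hochB n (tauChar (⇑ρ) ε F m n) a = 0) := by
  have hS' : ∀ a : A, SummS (n + 1) (delOp F (ρ a)) := fun a =>
    summS_of_memSchatten (Nat.succ_pos n) (by have := hS a; push_cast; exact this)
  have hc : ∀ a : A, IsCompactOperator (⇑(delOp F (ρ a))) := fun a => (hS a).1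
  have hG : ∀ a : A, (ε * F) * delOp F (ρ a) = delOp F (ρ a) * (ε * F) := fun a =>
    delOp_G ε F _ hF2 hFε (heven a)
  have hpow : (-1 : ℂ) ^ n = 1 := by rw [hn, pow_mul]; simp
  refine ⟨fun a => ?_, fun a => ?_, fun a => ?_⟩
  · rw [gComm_char m n hn ε F hε2 hF2 hFε (⇑ρ) heven a]
    set D : ℕ → H →L[ℂ] H :=
      fun j => delOp F (ρ (a ⟨j % (n + 1), Nat.mod_lt _ (Nat.succ_pos n)⟩)) with hD
    have hsum : SummS 1 (opList D 0 (n + 1)) :=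
      summS_opList (n + 1) (Nat.succ_pos n) D 0 (fun j _ => hS' _)
    have e : Complex.I ^ n • opList D 0 (n + 1) =
        (Complex.I ^ n • (1 : H →L[ℂ] H)) * opList D 0 (n + 1) := by
      rw [smul_mul_assoc, one_mul]
    refine ⟨?_, ?_⟩
    · rw [e, opList_succ]
      have h1 : IsCompactOperator (⇑(D 0 * opList D (0 + 1) n)) :=
        (hc _).comp_clm (opList D (0 + 1) n)
      exact h1.clm_comp (Complex.I ^ n • (1 : H →L[ℂ] H))
    · rw [e]
      exact schattenNorm_one_lt_top (hsum.left _)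
  · rw [tauChar_eq m n hn ε F hε2 hF2 hFε (⇑ρ) heven, tauChar_eq m n hn ε F hε2 hF2 hFε (⇑ρ) heven,
      hpow, one_mul]
    congr 1
    set D : ℕ → H →L[ℂ] H :=
      fun j => delOp F (ρ (a ⟨j % (n + 1), Nat.mod_lt _ (Nat.succ_pos n)⟩)) with hD
    have e1 : opList (fun j => delOp F (ρ (a (⟨j % (n + 1), Nat.mod_lt _ (Nat.succ_pos n)⟩ + 1))))
        0 (n + 1) = opList D 1 (n + 1) := by
      refine opList_congr _ _ _ _ _ (fun j _ => ?_)
      simp only [hD]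
      congr 3
      apply Fin.ext
      simp [Fin.val_add, Nat.add_comm]
    have hD0 : D (n + 1) = D 0 := by simp [hD]
    have e2 : opList D 1 (n + 1) = opList D 1 n * D 0 := by
      rw [opList_add, opList_one, add_comm 1 n, hD0]
    have e3 : ε * F * opList D 0 (n + 1) = D 0 * (ε * F * opList D 1 n) := by
      rw [opList_succ, ← mul_assoc, hG, mul_assoc]
    have hnuc : ∀ s, Nuc (opList D s (n + 1)) := fun s =>
      nuc_of_summS (summS_opList (n + 1) (Nat.succ_pos n) D s (fun j _ => hS' _))
    show opTrace (ε * F * opList (fun j => delOp F (ρ (a (⟨j % (n + 1),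
      Nat.mod_lt _ (Nat.succ_pos n)⟩ + 1)))) 0 (n + 1)) = _
    have e4 : ε * F * opList D 1 (n + 1) = (ε * F * opList D 1 n) * D 0 := by
      rw [e2, ← mul_assoc]
    rw [e1, e3, e4]
    refine trace_comm _ _ (hc _) ?_ ?_
    · rw [← e4]; exact (hnuc 1).left _
    · rw [← e3]; exact (hnuc 0).left _
  · obtain ⟨α, hα⟩ : ∃ α : ℕ → A, ∀ i : Fin (n + 2), a i = α i :=
      ⟨fun j => if h : j < n + 2 then a ⟨j, h⟩ else 0, fun i => by simp⟩
    unfold hochB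
    simp only [tauChar_eq m n hn ε F hε2 hF2 hFε (⇑ρ) heven]
    set K := ((2 * Complex.I * (Real.pi : ℂ)) ^ m * (Nat.factorial m : ℂ) *
      ((2 : ℂ)⁻¹ * Complex.I ^ n))
    set d : ℕ → H →L[ℂ] H := fun j => delOp F (ρ (α j)) with hd
    set r : ℕ → H →L[ℂ] H := fun j => ρ (α j) with hr
    let W : ℕ → H →L[ℂ] H := fun i => opList d 0 i * r i * opList d (i + 1) (n + 1 - i)
    let X : ℕ → ℂ := fun i => opTrace (ε * F * W i)
    have hnuc : ∀ f : ℕ → H →L[ℂ] H, (∀ j, SummS (n + 1) (f j)) → Nuc (opList f 0 (n + 1)) :=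
      fun f hf => nuc_of_summS (summS_opList (n + 1) (Nat.succ_pos n) f 0 (fun j _ => hf _))
    have hdS : ∀ j, SummS (n + 1) (d j) := fun j => hS' _
    have hW : ∀ i ≤ n, Nuc (W i) := by
      intro i hi
      have := hnuc (fun j => if j < i then d j else if j = i then r i * d (i + 1) else d (j + 1))
        (fun j => by
          split_ifs
          · exact hdS _
          · exact (hdS _).left _
          · exact hdS _)
      rw [show n + 1 = i + ((n - i) + 1) by omega, opList_add, opList_succ] at this
      have e1 : opList (fun j => if j < i then d j else if j = i then r i * d (i + 1) else d (j + 1))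
          0 i = opList d 0 i := opList_congr _ _ _ _ _ (fun j hj => by simp [hj])
      have e2 : opList (fun j => if j < i then d j else if j = i then r i * d (i + 1) else d (j + 1))
          (0 + i + 1) (n - i) = opList d (i + 1 + 1) (n - i) :=
        opList_congr _ _ _ _ _ (fun j hj => by
          rw [if_neg (by omega), if_neg (by omega)]
          congr 1; omega)
      rw [e1, e2] at this
      simp only [zero_add, lt_irrefl, if_true, if_false] at this
      simp only [W]
      rw [show n + 1 - i = (n - i) + 1 by omega, opList_succ]
      simpa only [mul_assoc] using this
    have hWl : W (n + 1) = opList d 0 (n + 1) * r (n + 1) := by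
      simp [W, opList_zero]
    have hW' : Nuc (W (n + 1)) := by
      rw [hWl]; exact (hnuc d hdS).right _
    have hWall : ∀ i ≤ n + 1, Nuc (W i) := by
      intro i hi
      rcases Nat.lt_or_ge n i with h | h
      · rw [show i = n + 1 by omega]; exact hW'
      · exact hW i h
    have hterm : ∀ i : Fin (n + 1), opTrace (ε * F * opList (fun j => delOp F (ρ
        (if (j % (n + 1)) < (i : ℕ) then
            a (Fin.castSucc ⟨j % (n + 1), Nat.mod_lt _ (Nat.succ_pos n)⟩)
          else if (j % (n + 1)) = (i : ℕ) then
            a (Fin.castSucc ⟨j % (n + 1), Nat.mod_lt _ (Nat.succ_pos n)⟩) *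
              a (Fin.succ ⟨j % (n + 1), Nat.mod_lt _ (Nat.succ_pos n)⟩)
          else a (Fin.succ ⟨j % (n + 1), Nat.mod_lt _ (Nat.succ_pos n)⟩)))) 0 (n + 1)) =
        X ((i : ℕ) + 1) + X i := by
      intro i
      obtain ⟨i, hi⟩ := i
      have hin : i ≤ n := by omega
      simp only [hα, Fin.val_castSucc, Fin.val_succ]
      have e0 : opList (fun j => delOp F (ρ
          (if (j % (n + 1)) < i then α (j % (n + 1))
            else if (j % (n + 1)) = i then α (j % (n + 1)) * α (j % (n + 1) + 1)
            else α (j % (n + 1) + 1)))) 0 (n + 1) =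
          opList (fun j => if j < i then d j else if j = i then d i * r (i + 1) + r i * d (i + 1)
            else d (j + 1)) 0 (n + 1) := by
        refine opList_congr _ _ _ _ _ (fun j hj => ?_)
        rw [zero_add, Nat.mod_eq_of_lt hj]
        split_ifs with h1 h2
        · rfl
        · subst h2
          rw [map_mul, delOp_mul]
        · rfl
      have e1 : opList (fun j => if j < i then d j else if j = i then
          d i * r (i + 1) + r i * d (i + 1) else d (j + 1)) 0 (n + 1) = W (i + 1) + W i := by
        rw [show n + 1 = i + ((n - i) + 1) by omega, opList_add, opList_succ]
        rw [opList_congr _ d 0 0 i (fun j hj => by simp [hj]),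
          opList_congr _ d (0 + i + 1) (i + 1 + 1) (n - i) (fun j hj => by
          rw [if_neg (by omega), if_neg (by omega)]
          congr 1; omega)]
        simp only [zero_add, lt_irrefl, if_true, if_false, W]
        rw [show n + 1 - (i + 1) = n - i by omega, show n + 1 - i = (n - i) + 1 by omega,
          opList_succ d (i + 1), opList_add d 0 i 1, opList_one, zero_add]
        noncomm_ring
      rw [e0, e1, mul_add, Nuc.trace_add ((hWall _ (by omega)).left _) ((hWall _ (by omega)).left _)]
    have hlast : opTrace (ε * F * opList (fun j => delOp F (ρ
        (if (j % (n + 1)) = 0 then a (Fin.last (n + 1)) * a 0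
          else a (Fin.castSucc ⟨j % (n + 1), Nat.mod_lt _ (Nat.succ_pos n)⟩)))) 0 (n + 1)) =
        X 0 + X (n + 1) := by
      simp only [hα, Fin.val_castSucc, Fin.val_last, Fin.val_zero]
      have e0 : opList (fun j => delOp F (ρ
        (if (j % (n + 1)) = 0 then α (n + 1) * α 0 else α (j % (n + 1))))) 0 (n + 1) =
          d (n + 1) * r 0 * opList d 1 n + r (n + 1) * opList d 0 (n + 1) := by
        rw [opList_succ, opList_succ d, opList_congr _ d (0 + 1) (0 + 1) n (fun j hj => by
          rw [Nat.mod_eq_of_lt (by omega), if_neg (by omega)])]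
        simp only [Nat.zero_mod, if_true, map_mul, delOp_mul, zero_add]
        noncomm_ring
      have hn1 : Nuc (d (n + 1) * r 0 * opList d 1 n) := by
        have := hnuc (fun j => if j = 0 then d (n + 1) * r 0 else d j) (fun j => by
          split_ifs
          · exact (hdS _).right _
          · exact hdS _)
        rw [opList_succ, opList_congr _ d (0 + 1) 1 n (fun j hj => by
          rw [if_neg (by omega)])] at this
        simpa using this
      have hn2 : Nuc (opList d 0 (n + 1)) := hnuc d hdS
      have hQ : IsCompactOperator (⇑(opList d 0 (n + 1))) := by
        rw [opList_succ]; exact (hc _).comp_clm _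
      have t1 : opTrace (ε * F * (d (n + 1) * r 0 * opList d 1 n)) = X 0 := by
        have c1 : ε * F * (d (n + 1) * r 0 * opList d 1 n) =
            d (n + 1) * (ε * F * (r 0 * opList d 1 n)) := by
          rw [mul_assoc (d (n + 1)), ← mul_assoc (ε * F), hG, mul_assoc]
        have c2 : ε * F * W 0 = (ε * F * (r 0 * opList d 1 n)) * d (n + 1) := by
          simp only [W, opList_zero, one_mul, zero_add, Nat.sub_zero]
          rw [opList_add d 1 n 1, opList_one, add_comm 1 n]
          simp only [mul_assoc]
        show _ = opTrace (ε * F * W 0)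
        rw [c1, c2]
        refine (trace_comm _ _ (hc _) ?_ ?_).symm
        · rw [← c2]; exact (hWall 0 (by omega)).left _
        · rw [← c1]; exact hn1.left _
      have t2 : opTrace (ε * F * (r (n + 1) * opList d 0 (n + 1))) = X (n + 1) := by
        show _ = opTrace (ε * F * W (n + 1))
        rw [hWl, ← mul_assoc, ← mul_assoc (ε * F),
          opList_comm (ε * F) d (fun j => hG _), mul_assoc (opList d 0 (n + 1))]
        exact trace_comm _ _ hQ (hn2.left _) (hn2.right _)
      rw [e0, mul_add, Nuc.trace_add (hn1.left _) ((hn2.left _).left _), t1, t2]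
    simp only [hterm, hlast]
    have hsum : ∑ i : Fin (n + 1), (-1 : ℂ) ^ (i : ℕ) * (K * (X ((i : ℕ) + 1) + X i)) =
        K * (X 0 + (-1) ^ n * X (n + 1)) := by
      rw [← alt_sum, Finset.mul_sum,
        Fin.sum_univ_eq_sum_range (fun i => (-1 : ℂ) ^ i * (K * (X (i + 1) + X i)))]
      exact Finset.sum_congr rfl (fun i _ => by ring)
    rw [hsum, pow_succ, hpow]
    ring
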